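/- arXiv:0902.4332 — 2 statements merged into one kernel-verified Lean document; each statement's English description precedes it below -/
import Mathlib

section
/- Let ℓ ≥ 3 be a prime, n ≥ 1 an integer, and Δ ∈ Z/ℓ^n a nonsquare element of even ℓ-adic valuation k (with Δ ≠ 0). Then the number of triples (x,y,z) ∈ (Z/ℓ^n)³ with xy = z² − Δ equals ℓ^{2n} + ℓ^{2n−1} − 2ℓ^{2n−k/2−1}. -/
lemma aux_range {N : ℕ} [NeZero N] (F : ℕ → ℕ) :
    ∑ x : ZMod N, F x.val = ∑ x ∈ Finset.range N, F x := by
  obtain ⟨m, rfl⟩ := Nat.exists_eq_succ_of_ne_zero (NeZero.ne N)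
  exact Fin.sum_univ_eq_sum_range F (m+1)

lemma aux_dvd {N d : ℕ} [NeZero N] (hd : d ∣ N) (a : ℤ) :
    ((d : ℕ) : ZMod N) ∣ (a : ZMod N) ↔ (d : ℤ) ∣ a := by
  constructor
  · rintro ⟨c, hc⟩
    have h : ((a - d * c.val : ℤ) : ZMod N) = 0 := by
      push_cast
      rw [hc]; simp
    rw [ZMod.intCast_zmod_eq_zero_iff_dvd] at h
    have h2 : (d : ℤ) ∣ a - d * c.val := (Int.natCast_dvd_natCast.2 hd).trans h
    simpa using h2.add (Dvd.intro (c.val : ℤ) rfl : (d : ℤ) ∣ d * c.val)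
  · rintro ⟨c, rfl⟩
    exact ⟨c, by push_cast; rfl⟩

lemma aux_dvd_val {N d : ℕ} [NeZero N] (hd : d ∣ N) (z : ZMod N) :
    ((d : ℕ) : ZMod N) ∣ z ↔ d ∣ z.val := by
  have := aux_dvd hd (z.val : ℤ)
  rw [Int.natCast_dvd_natCast, Int.cast_natCast, ZMod.natCast_zmod_val] at this
  exact this

open Classical in
lemma aux_mult {N d : ℕ} [NeZero N] (hd : d ∣ N) :
    (Finset.univ.filter fun z : ZMod N => ((d : ℕ) : ZMod N) ∣ z).card = N / d := by
  have hd0 : 0 < d := Nat.pos_of_dvd_of_pos hd (NeZero.pos N)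
  rw [Finset.card_filter]
  simp_rw [aux_dvd_val hd]
  rw [aux_range (fun x => if d ∣ x then 1 else 0), ← Finset.card_filter]
  obtain ⟨e, rfl⟩ := hd
  rw [Nat.mul_div_cancel_left e hd0]
  conv_rhs => rw [← Finset.card_range e]
  symm
  apply Finset.card_bij (fun k _ => d * k)
  · intro a ha
    simp only [Finset.mem_filter, Finset.mem_range] at ha ⊢
    exact ⟨Nat.mul_lt_mul_of_pos_left ha hd0, dvd_mul_right _ _⟩
  · intro a _ b _ h
    exact Nat.eq_of_mul_eq_mul_left hd0 h
  · intro b hb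
    simp only [Finset.mem_filter, Finset.mem_range] at hb
    obtain ⟨h1, c, rfl⟩ := hb
    exact ⟨c, Finset.mem_range.2 (Nat.lt_of_mul_lt_mul_left h1), rfl⟩

lemma aux_gcd {N : ℕ} [NeZero N] (x : ZMod N) :
    x ∣ ((N.gcd x.val : ℕ) : ZMod N) := by
  have h := Nat.gcd_eq_gcd_ab N x.val
  have h2 := congrArg (Int.cast : ℤ → ZMod N) h
  push_cast at h2
  simp only [CharP.cast_eq_zero, zero_mul, zero_add, ZMod.natCast_zmod_val] at h2
  rw [h2]
  exact dvd_mul_right _ _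

open Classical in
lemma aux_fiber {N : ℕ} [NeZero N] (x c : ZMod N) :
    (Finset.univ.filter fun y : ZMod N => x * y = c).card =
      if ((N.gcd x.val : ℕ) : ZMod N) ∣ c then N.gcd x.val else 0 := by
  have hgN : N.gcd x.val ∣ N := Nat.gcd_dvd_left _ _
  have hgx : ((N.gcd x.val : ℕ) : ZMod N) ∣ x := (aux_dvd_val hgN x).2 (Nat.gcd_dvd_right _ _)
  have hg0 : 0 < N.gcd x.val := Nat.gcd_pos_of_pos_left _ (NeZero.pos N)
  split_ifs with h
  · obtain ⟨y0, hy0⟩ := (aux_gcd x).trans h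
    have hq : N / N.gcd x.val ∣ N := Nat.div_dvd_of_dvd hgN
    have key := aux_mult (N := N) hq
    rw [Nat.div_div_self hgN (NeZero.ne N)] at key
    rw [← key]
    apply Finset.card_bij (fun y _ => y - y0)
    · intro y hy
      simp only [Finset.mem_filter, Finset.mem_univ, true_and] at hy ⊢
      rw [aux_dvd_val hq]
      have h0 : x * (y - y0) = 0 := by rw [mul_sub, hy, ← hy0, sub_self]
      have h1 : ((x.val * (y - y0).val : ℕ) : ZMod N) = 0 := by
        push_cast; simpa using h0
      rw [ZMod.natCast_eq_zero_iff] at h1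
      have hc : Nat.Coprime (N / N.gcd x.val) (x.val / N.gcd x.val) :=
        Nat.coprime_div_gcd_div_gcd hg0
      apply hc.dvd_of_dvd_mul_left
      apply Nat.dvd_of_mul_dvd_mul_left hg0
      rw [Nat.mul_div_cancel' hgN, ← mul_assoc, Nat.mul_div_cancel' (Nat.gcd_dvd_right _ _)]
      exact h1
    · intro a _ b _ h
      simpa using h
    · intro b hb
      simp only [Finset.mem_filter, Finset.mem_univ, true_and] at hb
      refine ⟨b + y0, ?_, by simp⟩
      simp only [Finset.mem_filter, Finset.mem_univ, true_and]
      obtain ⟨e, he⟩ := hb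
      obtain ⟨f, hf⟩ := hgx
      have : x * b = 0 := by
        have : ((N.gcd x.val : ℕ) : ZMod N) * ((N / N.gcd x.val : ℕ) : ZMod N) = 0 := by
          rw [← Nat.cast_mul, Nat.mul_div_cancel' hgN]; simp
        linear_combination (f * e) * this + x * he + (((N / N.gcd x.val : ℕ) : ZMod N) * e) * hf
      rw [mul_add, this, hy0, zero_add]
  · rw [Finset.card_eq_zero, Finset.filter_eq_empty_iff]
    rintro y - rfl
    exact h (hgx.trans (dvd_mul_right _ _))

lemma aux_gcdsum {N : ℕ} [NeZero N] (F : ℕ → ℕ) :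
    ∑ x : ZMod N, F (N.gcd x.val) = ∑ d ∈ N.divisors, (N / d).totient * F d := by
  rw [aux_range (fun x => F (N.gcd x)),
    ← Finset.sum_fiberwise_of_maps_to (t := N.divisors) (g := fun x => N.gcd x)]
  · refine Finset.sum_congr rfl fun d hd => ?_
    rw [Nat.totient_div_of_dvd (Nat.dvd_of_mem_divisors hd), ← smul_eq_mul, ← Finset.sum_const]
    refine Finset.sum_congr rfl fun x hx => ?_
    rw [(Finset.mem_filter.1 hx).2]
  · intro x _
    exact Nat.mem_divisors.2 ⟨Nat.gcd_dvd_left _ _, NeZero.ne N⟩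

/-- unit congruent to a square mod ℓ is a square -/
lemma aux_sq {ℓ n : ℕ} (hℓ : ℓ.Prime) (h3 : 3 ≤ ℓ) (hn : 1 ≤ n) (u w : ℤ)
    (hu : ¬ (ℓ : ℤ) ∣ u) (h : (ℓ : ℤ) ∣ w ^ 2 - u) : IsSquare (u : ZMod (ℓ ^ n)) := by
  have hp : Prime (ℓ : ℤ) := Nat.prime_iff_prime_int.1 hℓ
  have hw : ¬ (ℓ : ℤ) ∣ w := by
    intro hw
    apply hu
    have := dvd_sub (hw.mul_left w) h
    have e : w * w - (w ^ 2 - u) = u := by ring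
    rwa [e] at this
  -- u ^ (ℓ^(n-1)) = (w^2)^(ℓ^(n-1)) mod ℓ^n
  have h1 := dvd_sub_pow_of_dvd_sub h (n - 1)
  rw [Nat.sub_add_cancel hn] at h1
  have h2 : ((w ^ 2) ^ ℓ ^ (n-1) : ZMod (ℓ ^ n)) = (u : ZMod (ℓ ^ n)) ^ ℓ ^ (n-1) := by
    have : (((w ^ 2) ^ ℓ ^ (n-1) - u ^ ℓ ^ (n-1) : ℤ) : ZMod (ℓ ^ n)) = 0 := by
      rw [ZMod.intCast_zmod_eq_zero_iff_dvd]; exact_mod_cast h1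
    push_cast at this
    exact sub_eq_zero.1 this
  have hodd : Odd (ℓ ^ (n-1)) := (hℓ.odd_of_ne_two (by omega)).pow
  obtain ⟨t, ht⟩ := hodd
  have huu : IsUnit (u : ZMod (ℓ ^ n)) := by
    rw [ZMod.coe_int_isUnit_iff_isCoprime]
    push_cast
    exact ((hp.coprime_iff_not_dvd).2 hu).pow_left
  obtain ⟨v, hv⟩ := huu
  rw [ht, ← hv] at h2
  -- v^(2t+1) = (w^(2t+1))^2
  refine ⟨(w : ZMod (ℓ ^ n)) ^ (2*t+1) * ((v⁻¹ : (ZMod (ℓ^n))ˣ) : ZMod (ℓ ^ n)) ^ t, ?_⟩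
  rw [← hv]
  have h4 : (v : ZMod (ℓ^n)) ^ t * ((v⁻¹ : (ZMod (ℓ^n))ˣ) : ZMod (ℓ ^ n)) ^ t = 1 := by
    rw [← mul_pow]; simp
  set a := (v : ZMod (ℓ^n))
  set b := ((v⁻¹ : (ZMod (ℓ^n))ˣ) : ZMod (ℓ ^ n))
  calc a = a * (a ^ t * b ^ t) ^ 2 := by rw [h4]; ring
    _ = a ^ (2 * t + 1) * (b ^ t) ^ 2 := by ring
    _ = _ := by rw [← h2]; ring

lemma aux_val {ℓ : ℕ} (hℓ : ℓ.Prime) (z : ℤ) (i : ℕ) :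
    (ℓ : ℤ) ^ i ∣ z ^ 2 ↔ (ℓ : ℤ) ^ ((i + 1) / 2) ∣ z := by
  have hp : Prime (ℓ : ℤ) := Nat.prime_iff_prime_int.1 hℓ
  rw [pow_dvd_iff_le_emultiplicity, pow_dvd_iff_le_emultiplicity, emultiplicity_pow hp]
  by_cases h : emultiplicity (ℓ:ℤ) z = ⊤
  · rw [h]; simp
  · obtain ⟨m, hm⟩ := ENat.ne_top_iff_exists.1 h
    rw [← hm]
    norm_cast
    omega

lemma aux_sum (ℓ n m : ℕ) (h : m ≤ n) :
    ((ℓ : ℤ) - 1) * ∑ i ∈ Finset.range (2 * m + 1), (ℓ : ℤ) ^ (n - (i + 1) / 2) =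
      ℓ ^ (n + 1) + ℓ ^ n - 2 * ℓ ^ (n - m) := by
  induction m with
  | zero => simp; ring
  | succ m ih =>
    rw [show 2 * (m + 1) + 1 = (2 * m + 1) + 1 + 1 by ring, Finset.sum_range_succ,
      Finset.sum_range_succ, mul_add, mul_add, ih (by omega)]
    rw [show (2 * m + 1 + 1) / 2 = m + 1 by omega, show (2 * m + 1 + 1 + 1) / 2 = m + 1 by omega]
    obtain ⟨r, rfl⟩ := Nat.exists_eq_add_of_le h
    rw [show m + 1 + r - (m + 1) = r by omega, show m + 1 + r - m = r + 1 by omega]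
    ring


open Classical in
/-- Number of solutions of `x y = z² - Δ` over `Z/ℓ^n` when `Δ` is a nonsquare of even
valuation `k`. -/
theorem stmt5 (ℓ : ℕ) (hℓ : ℓ.Prime) (h3 : 3 ≤ ℓ) (n : ℕ) (hn : 1 ≤ n)
    (Δ : ZMod (ℓ ^ n)) (hΔ : Δ ≠ 0) (hns : ¬ IsSquare Δ)
    (k : ℕ) (hk : k = padicValNat ℓ Δ.val) (heven : Even k) :
    (Nat.card {p : ZMod (ℓ ^ n) × ZMod (ℓ ^ n) × ZMod (ℓ ^ n) //
        p.1 * p.2.1 = p.2.2 ^ 2 - Δ} : ℤ) =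
      ℓ ^ (2 * n) + ℓ ^ (2 * n - 1) - 2 * ℓ ^ (2 * n - k / 2 - 1) := by
  have hN : NeZero (ℓ ^ n) := ⟨pow_ne_zero _ hℓ.ne_zero⟩
  have hp : Prime (ℓ : ℤ) := Nat.prime_iff_prime_int.1 hℓ
  have hfact : Fact ℓ.Prime := ⟨hℓ⟩
  have hv0 : Δ.val ≠ 0 := by rwa [Ne, ZMod.val_eq_zero]
  have hkD : ℓ ^ k ∣ Δ.val := hk ▸ pow_padicValNat_dvd
  have hkD' : ¬ ℓ ^ (k + 1) ∣ Δ.val := hk ▸ pow_succ_padicValNat_not_dvd hv0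
  have hkn : k < n := by
    have h1 := Nat.le_of_dvd (Nat.pos_of_ne_zero hv0) hkD
    have h2 := ZMod.val_lt Δ
    exact (Nat.pow_lt_pow_iff_right hℓ.one_lt).1 (h1.trans_lt h2)
  obtain ⟨m, hm⟩ := heven
  obtain ⟨u, hu⟩ := hkD
  have hu' : ¬ (ℓ : ℤ) ∣ u := by
    intro h
    apply hkD'
    rw [hu, pow_succ]
    exact Nat.mul_dvd_mul_left _ (Int.natCast_dvd_natCast.1 h)
  -- divisibility translated to integers
  have hdvd : ∀ i ≤ n, ∀ z : ZMod (ℓ ^ n), ((ℓ ^ i : ℕ) : ZMod (ℓ ^ n)) ∣ z ^ 2 - Δ ↔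
      (ℓ : ℤ) ^ i ∣ (z.val : ℤ) ^ 2 - (ℓ : ℤ) ^ k * u := by
    intro i hi z
    have := aux_dvd (N := ℓ ^ n) (pow_dvd_pow ℓ hi) ((z.val : ℤ) ^ 2 - (Δ.val : ℤ))
    rw [hu] at this
    have e : (((z.val : ℤ) ^ 2 - (((ℓ ^ k * u : ℕ)) : ℤ) : ℤ) : ZMod (ℓ ^ n)) = z ^ 2 - Δ := by
      rw [← hu]; push_cast; simp
    rw [e] at this
    rw [this]
    push_cast
    rfl
  -- no solutions beyond k
  have hno : ∀ i ≤ n, k < i → ∀ z : ZMod (ℓ ^ n),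
      ¬ ((ℓ ^ i : ℕ) : ZMod (ℓ ^ n)) ∣ z ^ 2 - Δ := by
    intro i hi hki z hz
    rw [hdvd i hi] at hz
    have hz1 : (ℓ : ℤ) ^ (k + 1) ∣ (z.val : ℤ) ^ 2 - (ℓ : ℤ) ^ k * u := (pow_dvd_pow _ hki).trans hz
    have hz2 : (ℓ : ℤ) ^ k ∣ (z.val : ℤ) ^ 2 :=
      (dvd_sub_left (dvd_mul_right _ _)).1 ((pow_dvd_pow _ (Nat.le_succ k)).trans hz1)
    rw [aux_val hℓ, show (k + 1) / 2 = m by omega] at hz2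
    obtain ⟨w, hw⟩ := hz2
    have e : (z.val : ℤ) ^ 2 - (ℓ : ℤ) ^ k * u = ℓ ^ k * (w ^ 2 - u) := by
      rw [hw, hm]; ring
    rw [e, pow_succ] at hz1
    have h5 := (mul_dvd_mul_iff_left (pow_ne_zero k hp.ne_zero)).1 hz1
    obtain ⟨s, hs⟩ := aux_sq hℓ h3 hn u w hu' h5
    apply hns
    refine ⟨(ℓ : ZMod (ℓ ^ n)) ^ m * s, ?_⟩
    have : Δ = ((Δ.val : ℕ) : ZMod (ℓ ^ n)) := by simp
    rw [this, hu, hm]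
    push_cast at hs ⊢
    rw [hs]; ring
  have hcnt : ∀ i ≤ k, (Finset.univ.filter fun z : ZMod (ℓ ^ n) =>
      ((ℓ ^ i : ℕ) : ZMod (ℓ ^ n)) ∣ z ^ 2 - Δ).card = ℓ ^ (n - (i + 1) / 2) := by
    intro i hi
    have hle : (i + 1) / 2 ≤ n := by omega
    have h := aux_mult (N := ℓ ^ n) (pow_dvd_pow ℓ hle)
    rw [Nat.pow_div hle hℓ.pos] at h
    rw [← h]
    congr 1
    ext z
    simp only [Finset.mem_filter, Finset.mem_univ, true_and]
    rw [hdvd i (by omega), aux_dvd_val (pow_dvd_pow ℓ hle),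
      dvd_sub_left ((pow_dvd_pow _ hi).trans (dvd_mul_right _ _)), aux_val hℓ,
      ← Int.natCast_dvd_natCast]
    push_cast
    rfl
  have hz : ∀ z : ZMod (ℓ ^ n), ∑ x : ZMod (ℓ ^ n),
      (Finset.univ.filter fun y : ZMod (ℓ ^ n) => x * y = z ^ 2 - Δ).card =
      ∑ i ∈ Finset.range (k + 1), ℓ ^ (n - 1) * (ℓ - 1) *
        (if ((ℓ ^ i : ℕ) : ZMod (ℓ ^ n)) ∣ z ^ 2 - Δ then 1 else 0) := by
    intro z
    simp_rw [aux_fiber]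
    rw [aux_gcdsum (fun d => if ((d : ℕ) : ZMod (ℓ ^ n)) ∣ z ^ 2 - Δ then d else 0),
      Nat.sum_divisors_prime_pow hℓ]
    symm
    rw [← Finset.sum_subset (Finset.range_mono (by omega : k + 1 ≤ n + 1))]
    · refine Finset.sum_congr rfl fun i hi => ?_
      have hi' := Finset.mem_range.1 hi
      split_ifs
      · rw [Nat.pow_div (by omega) hℓ.pos, Nat.totient_prime_pow hℓ (by omega), mul_one]
        rw [show n - 1 = (n - i - 1) + i by omega, pow_add]
        ring
      · simp
    · intro i hi hi'
      rw [Finset.mem_range] at hi hi'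
      rw [if_neg (hno i (by omega) (by omega) z), mul_zero]
  have hcard : Nat.card {p : ZMod (ℓ ^ n) × ZMod (ℓ ^ n) × ZMod (ℓ ^ n) //
        p.1 * p.2.1 = p.2.2 ^ 2 - Δ} =
      ∑ z : ZMod (ℓ ^ n), ∑ x : ZMod (ℓ ^ n),
        (Finset.univ.filter fun y : ZMod (ℓ ^ n) => x * y = z ^ 2 - Δ).card := by
    rw [Nat.card_eq_fintype_card, Fintype.card_subtype, Finset.card_filter,
      Fintype.sum_prod_type, Finset.sum_comm' (s' := fun _ => Finset.univ) (t' := Finset.univ)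
        (by simp)]
    simp_rw [Finset.card_filter]
    rw [Fintype.sum_prod_type, Finset.sum_comm]
    refine Finset.sum_congr rfl fun z _ => ?_
    rw [Finset.sum_comm]
  rw [hcard]
  simp_rw [hz]
  rw [Finset.sum_comm]
  simp_rw [← Finset.mul_sum, ← Finset.card_filter]
  rw [Finset.sum_congr rfl (fun i hi => hcnt i (by have := Finset.mem_range.1 hi; omega))]
  push_cast [Nat.cast_sub hℓ.one_le]
  have hs := aux_sum ℓ n m (by omega)
  rw [show k = 2 * m by omega, mul_assoc, hs]
  rw [show 2 * n = (n - 1) + (n + 1) by omega, show n - 1 + (n + 1) - 1 = (n - 1) + n by omega,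
    show n - 1 + (n + 1) - 2 * m / 2 - 1 = (n - 1) + (n - m) by omega, pow_add, pow_add, pow_add]
  ring
end

section
/- Let p ≥ 5 be a prime and let c_{A,B} ∈ F_p[A,B] be the coefficient of x^{p−1} in (x³ + Ax + B)^{(p−1)/2}. Then c_{A,B} is squarefree as a polynomial over the algebraic closure of F_p. -/
open Polynomial

noncomputable def coeffDer (K : Type*) [Field K] : Derivation K K[X][X] K[X][X] :=
  (PolynomialModule.equivPolynomialSelf (R := K[X])).toLinearMap.compDer
    (Polynomial.derivative' (R := K)).mapCoeffs

lemma coeffDer_coeff {K : Type*} [Field K] (P : K[X][X]) (i : ℕ) :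
    (coeffDer K P).coeff i = derivative (P.coeff i) := rfl

lemma coeffDer_C {K : Type*} [Field K] (P : K[X]) :
    coeffDer K (C P) = C (derivative P) := by
  ext1 i
  rw [coeffDer_coeff, coeff_C, coeff_C]; split_ifs <;> simp

lemma coeffDer_X {K : Type*} [Field K] :
    coeffDer K (X : K[X][X]) = 0 := by
  ext1 i
  rw [coeffDer_coeff, coeff_X]; split_ifs <;> simp

lemma ode_A {K : Type*} [Field K] (n : ℕ) (h : (2 * n + 5 : K) = 0) (b : K) (F : K[X][X])
    (hF : F = X ^ 3 + C X * X + C (C b)) (f : K[X]) (hf : f = (F ^ (n + 2)).coeff (2 * (n + 2))) :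
    4 * (4 * X ^ 3 + 27 * C b ^ 2) * derivative (derivative f) + 48 * X ^ 2 * derivative f
      + 7 * X * f = 0 := by
  have hD : coeffDer K F = X := by
    rw [hF]
    simp [Derivation.leibniz_pow, coeffDer_C, coeffDer_X]
  have h1 : coeffDer K (F ^ (n + 2)) = C ((n:K[X]) + 2) * (F ^ (n + 1) * X) := by
    rw [Derivation.leibniz_pow, hD]; simp [map_ofNat C]
  have h2 : coeffDer K (C ((n:K[X]) + 2) * (F ^ (n + 1) * X)) = C (((n:K[X]) + 2) * ((n:K[X]) + 1)) * (F ^ n * X ^ 2) := by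
    simp only [Derivation.leibniz, Derivation.leibniz_pow, hD, coeffDer_C, coeffDer_X]
    simp [map_ofNat C]
    ring
  have hX : (2 * (n:K[X]) + 5 : K[X]) = 0 := by
    have := congrArg (C : K → K[X]) h; simpa [map_ofNat C] using this
  have hXX : (2 * (n:K[X][X]) + 5 : K[X][X]) = 0 := by
    have := congrArg (C : K[X] → K[X][X]) hX; simpa [map_ofNat C] using this
  rw [hf, ← coeffDer_coeff, ← coeffDer_coeff, h1, h2, mul_comm (7 * X), mul_comm (48 * X ^ 2),
    mul_comm (4 * _), ← coeff_mul_C, ← coeff_mul_C, ← coeff_mul_C, ← coeff_add, ← coeff_add]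
  have key : C (((n:K[X]) + 2) * ((n:K[X]) + 1)) * (F ^ n * X ^ 2) * C (4 * (4 * X ^ 3 + 27 * C b ^ 2)) +
      C ((n:K[X]) + 2) * (F ^ (n + 1) * X) * C (48 * X ^ 2) + F ^ (n + 2) * C (7 * X) =
      derivative (-(14 * C X * X ^ 4 + 10 * C X ^ 2 * X ^ 2 + 20 * C X * C (C b) * X
        + 18 * C (C b) ^ 2) * F ^ (n + 1)) := by
    have hF' : derivative F = 3 * X ^ 2 + C X := by
      rw [hF]; simp [map_ofNat C]; norm_num
    rw [derivative_mul, derivative_pow, hF']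
    simp [map_ofNat C, derivative_pow]
    generalize hs : (C X : K[X][X]) = s
    generalize ht : (C (C b) : K[X][X]) = t
    have hF2 : F = X ^ 3 + s * X + t := by rw [hF, hs, ht]
    generalize hG : F ^ n = G
    rw [pow_succ F (n+1), pow_succ F n, hG, hF2]
    linear_combination (G * ((4 * s ^ 3 + 27 * t ^ 2) * X ^ 2 * (2 * n + 1)
      + 24 * s ^ 2 * X * (X ^ 3 + s * X + t) +
      (7 * s * X ^ 4 + 5 * s ^ 2 * X ^ 2 + 10 * s * t * X + 9 * t ^ 2) * (3 * X ^ 2 + s))) * hXX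
  rw [key, coeff_derivative]
  push_cast
  linear_combination (_) * hX

lemma ode_B {K : Type*} [Field K] (n : ℕ) (h : (2 * n + 5 : K) = 0) (a : K) (F : K[X][X])
    (hF : F = X ^ 3 + C (C a) * X + C X) (f : K[X]) (hf : f = (F ^ (n + 2)).coeff (2 * (n + 2))) :
    4 * (4 * C a ^ 3 + 27 * X ^ 2) * derivative (derivative f) + 216 * X * derivative f
      + 15 * f = 0 := by
  have hD : coeffDer K F = 1 := by
    rw [hF]
    simp [Derivation.leibniz_pow, coeffDer_C, coeffDer_X]
  have h1 : coeffDer K (F ^ (n + 2)) = C ((n:K[X]) + 2) * (F ^ (n + 1)) := by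
    rw [Derivation.leibniz_pow, hD]; simp [map_ofNat C]
  have h2 : coeffDer K (C ((n:K[X]) + 2) * (F ^ (n + 1))) = C (((n:K[X]) + 2) * ((n:K[X]) + 1)) * (F ^ n) := by
    simp only [Derivation.leibniz, Derivation.leibniz_pow, hD, coeffDer_C, coeffDer_X]
    simp [map_ofNat C]
    ring
  have hX : (2 * (n:K[X]) + 5 : K[X]) = 0 := by
    have := congrArg (C : K → K[X]) h; simpa [map_ofNat C] using this
  have hXX : (2 * (n:K[X][X]) + 5 : K[X][X]) = 0 := by
    have := congrArg (C : K[X] → K[X][X]) hX; simpa [map_ofNat C] using this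
  rw [hf, ← coeffDer_coeff, ← coeffDer_coeff, h1, h2, mul_comm 15, mul_comm (216 * X),
    mul_comm (4 * _), ← coeff_mul_C, ← coeff_mul_C, ← coeff_mul_C, ← coeff_add, ← coeff_add]
  have key : C (((n:K[X]) + 2) * ((n:K[X]) + 1)) * (F ^ n) * C (4 * (4 * C a ^ 3 + 27 * X ^ 2)) +
      C ((n:K[X]) + 2) * (F ^ (n + 1)) * C (216 * X) + F ^ (n + 2) * C 15 =
      derivative (-(30 * X ^ 4 + 42 * C (C a) * X ^ 2 + 12 * C X * X
        + 8 * C (C a) ^ 2) * F ^ (n + 1)) := by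
    have hF' : derivative F = 3 * X ^ 2 + C (C a) := by
      rw [hF]; simp [map_ofNat C]; norm_num
    rw [derivative_mul, derivative_pow, hF']
    simp [map_ofNat C, derivative_pow]
    generalize hs : (C X : K[X][X]) = t
    generalize ht : (C (C a) : K[X][X]) = s
    have hF2 : F = X ^ 3 + s * X + t := by rw [hF, hs, ht]
    generalize hG : F ^ n = G
    rw [pow_succ F (n+1), pow_succ F n, hG, hF2]
    have e15 : (C 15 : K[X][X]) = 15 := rfl
    try rw [e15]
    linear_combination (G * ((4 * s ^ 3 + 27 * t ^ 2) * (2 * n + 1)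
      + 108 * t * (X ^ 3 + s * X + t) +
      (15 * X ^ 4 + 21 * s * X ^ 2 + 6 * t * X + 4 * s ^ 2) * (3 * X ^ 2 + s))) * hXX
  rw [key, coeff_derivative]
  push_cast
  linear_combination (_) * hX

lemma deg_bound {K : Type*} [Field K] (F : K[X][X]) (hF : ∀ i, (F.coeff i).natDegree ≤ 1) (m : ℕ) :
    ∀ i, ((F ^ m).coeff i).natDegree ≤ m := by
  induction m with
  | zero => intro i; rw [pow_zero, coeff_one]; split_ifs <;> simp
  | succ m ih =>
    intro i
    rw [pow_succ, coeff_mul]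
    refine natDegree_sum_le_of_forall_le _ _ fun x _ => ?_
    exact natDegree_mul_le.trans (add_le_add (ih _) (hF _))

lemma ode_simple {K : Type*} [Field K] (p : ℕ) [CharP K p] [Fact p.Prime] (f P Q R : K[X]) (hf : f ≠ 0)
    (hdeg : f.natDegree < p) (h : P * derivative (derivative f) + Q * derivative f + R * f = 0)
    (a : K) (ha : P.eval a ≠ 0) : ¬ (X - C a) ^ 2 ∣ f := by
  intro hd
  obtain ⟨g, hg, hga⟩ := exists_eq_pow_rootMultiplicity_mul_and_not_dvd f hf a
  have h2 : 2 ≤ rootMultiplicity a f := (le_rootMultiplicity_iff hf).2 hd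
  have hle : rootMultiplicity a f ≤ f.natDegree := by
    have h3 := natDegree_le_of_dvd (pow_rootMultiplicity_dvd f a) hf
    simpa using h3
  obtain ⟨n, hn⟩ := Nat.exists_eq_add_of_le' h2
  rw [hn] at hg hle
  have hne : (((n + 2 : ℕ) : K) * ((n + 1 : ℕ) : K)) ≠ 0 := by
    refine mul_ne_zero ?_ ?_ <;> rw [Ne, CharP.cast_eq_zero_iff K p] <;>
      exact fun hh => absurd (Nat.le_of_dvd (by omega) hh) (by omega)
  have e1 : derivative f = (X - C a) ^ (n + 1) * (((n:K[X]) + 2) * g + (X - C a) * derivative g) := by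
    conv_lhs => rw [hg]
    simp [derivative_mul, derivative_pow, map_ofNat C]
    ring
  have e2 : derivative (derivative f) = (X - C a) ^ n * (((n:K[X]) + 2) * ((n:K[X]) + 1) * g
      + (X - C a) * (2 * ((n:K[X]) + 2) * derivative g + (X - C a) * derivative (derivative g))) := by
    rw [e1]
    simp [derivative_mul, derivative_pow, map_ofNat C]
    ring
  have e3 : (X - C a) ^ n * (P * (((n:K[X]) + 2) * ((n:K[X]) + 1) * g
      + (X - C a) * (2 * ((n:K[X]) + 2) * derivative g + (X - C a) * derivative (derivative g)))
      + (X - C a) * (Q * (((n:K[X]) + 2) * g + (X - C a) * derivative g) + R * (X - C a) * g)) = 0 := by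
    rw [← h, e2, e1]
    conv_rhs => rw [hg]
    ring
  have e4 := (mul_eq_zero.1 e3).resolve_left (pow_ne_zero _ (X_sub_C_ne_zero a))
  have e5 := congrArg (eval a) e4
  simp at e5
  push_cast at hne
  rw [dvd_iff_isRoot, IsRoot.def] at hga
  have := mul_ne_zero hne hga
  rcases e5 with h | h
  · exact ha h
  · apply this; simpa using h

lemma nodal {K : Type*} [Field K] (p m : ℕ) [CharP K p] [hp : Fact p.Prime] (hp5 : 5 ≤ p)
    (hm : p = 2 * m + 1) (r : K) (hr : r ≠ 0) :
    ((X ^ 3 + C (-3 * r ^ 2) * X + C (2 * r ^ 3) : K[X]) ^ m).coeff (2 * m) ≠ 0 := by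
  have e : (X ^ 3 + C (-3 * r ^ 2) * X + C (2 * r ^ 3) : K[X]) = (X - C r) ^ 2 * (X + C (2 * r)) := by
    simp [map_ofNat C]; ring
  set f := (X ^ 3 + C (-3 * r ^ 2) * X + C (2 * r ^ 3) : K[X]) ^ m with hf
  have hdeg : f.natDegree ≤ m * 3 := by
    rw [hf]; refine natDegree_pow_le_of_le _ (by compute_degree)
  have h1 : hasseDeriv (2 * m) f = C (f.coeff (2 * m)) := by
    ext i
    rw [hasseDeriv_coeff, coeff_C]
    split_ifs with hi
    · simp [hi]
    · by_cases hi2 : m < i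
      · rw [coeff_eq_zero_of_natDegree_lt (lt_of_le_of_lt hdeg (by omega)), mul_zero]
      · have : p ∣ (i + 2 * m).choose (2 * m) := by
          exact Nat.Prime.dvd_choose hp.out (by omega) (by omega) (by omega)
        rw [(CharP.cast_eq_zero_iff K p _).2 this, zero_mul]
  have h2 := taylor_coeff (r := r) (f := f) (2 * m)
  rw [h1, eval_C] at h2
  rw [← h2, hf, e, mul_pow, ← pow_mul, taylor_mul, taylor_pow, map_sub, taylor_X, taylor_C,
    add_sub_cancel_right, coeff_X_pow_mul', if_pos le_rfl, Nat.sub_self, taylor_coeff_zero]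
  have h3 : ((3 : ℕ) : K) ≠ 0 := by
    rw [Ne, CharP.cast_eq_zero_iff K p]
    exact fun hh => absurd (Nat.le_of_dvd (by omega) hh) (by omega)
  have : r + 2 * r = (3 : ℕ) * r := by push_cast; ring
  simp [this]
  intro h; simp_all

lemma coeff_hom {R S : Type*} [CommRing R] [CommRing S] (φ : R →+* S) (u v : R) (m k : ℕ) :
    φ (((X ^ 3 + C u * X + C v : R[X]) ^ m).coeff k) =
      ((X ^ 3 + C (φ u) * X + C (φ v) : S[X]) ^ m).coeff k := by
  rw [← coeff_map]; simp

set_option maxHeartbeats 1000000 in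
lemma point {K : Type*} [Field K] [IsAlgClosed K] (p n : ℕ) [CharP K p] [hp : Fact p.Prime]
    (hm : p = 2 * (n + 2) + 1) (c q : MvPolynomial (Fin 2) K)
    (hc : c = ((X ^ 3 + C (MvPolynomial.X 0) * X + C (MvPolynomial.X 1) :
      (MvPolynomial (Fin 2) K)[X]) ^ (n + 2)).coeff (2 * (n + 2)))
    (hq : q * q ∣ c) (a b : K) (hab : a ≠ 0 ∨ b ≠ 0) :
    MvPolynomial.aeval ![a, b] q ≠ 0 := by
  intro h0
  have hcast : ∀ k : ℕ, 0 < k → k < p → (k : K) ≠ 0 := by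
    intro k h1 h2
    rw [Ne, CharP.cast_eq_zero_iff K p]
    exact fun hh => absurd (Nat.le_of_dvd (by omega) hh) (by omega)
  have k2 : (2 : K) ≠ 0 := by exact_mod_cast hcast 2 (by omega) (by omega)
  have k3 : (3 : K) ≠ 0 := by exact_mod_cast hcast 3 (by omega) (by omega)
  have k4 : (4 : K) ≠ 0 := by
    have := mul_ne_zero k2 k2; norm_num at this; exact this
  have hchar : (2 * n + 5 : K) = 0 := by
    have : ((2 * (n + 2) + 1 : ℕ) : K) = 0 := by
      rw [← hm]; exact CharP.cast_eq_zero K p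
    push_cast at this
    linear_combination this
  by_cases hΔ : 4 * a ^ 3 + 27 * b ^ 2 = 0
  · have ha : a ≠ 0 := by
      rintro rfl
      rcases hab with h | h
      · exact h rfl
      · have := mul_ne_zero (pow_ne_zero 3 k3) (pow_ne_zero 2 h)
        apply this; linear_combination hΔ
    have hb : b ≠ 0 := by
      rintro rfl
      apply mul_ne_zero k4 (pow_ne_zero 3 ha); linear_combination hΔ
    have hr : -3 * b / (2 * a) ≠ 0 :=
      div_ne_zero (mul_ne_zero (neg_ne_zero.2 k3) hb) (mul_ne_zero k2 ha)
    have := nodal p (n + 2) (by omega) hm _ hr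
    have e1 : -3 * (-3 * b / (2 * a)) ^ 2 = a := by
      field_simp
      linear_combination -hΔ
    have e2 : 2 * (-3 * b / (2 * a)) ^ 3 = b := by
      field_simp
      linear_combination -hΔ
    rw [e1, e2] at this
    apply this
    have h2 := coeff_hom (MvPolynomial.aeval ![a, b] : MvPolynomial (Fin 2) K →ₐ[K] K).toRingHom
      (MvPolynomial.X 0) (MvPolynomial.X 1) (n + 2) (2 * (n + 2))
    rw [← hc] at h2
    simp at h2
    rw [← h2]
    obtain ⟨d, hd⟩ := hq
    rw [MvPolynomial.aeval_eq_eval] at h0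
    rw [hd, map_mul, map_mul]
    rw [h0]; simp
  · rcases hab with ha | hb
    · obtain ⟨r, hr⟩ := IsAlgClosed.exists_pow_nat_eq (-a / 3) (n := 2) (by norm_num)
      have hr0 : r ≠ 0 := by
        rintro rfl
        have : a = 0 := by field_simp at hr; linear_combination hr
        exact ha this
      have hnod := nodal p (n + 2) (by omega) hm _ hr0
      rw [hr, show -3 * (-a / 3) = a by field_simp] at hnod
      let φ : MvPolynomial (Fin 2) K →ₐ[K] K[X] := MvPolynomial.aeval ![C a, X]
      have h2 := coeff_hom φ.toRingHom (MvPolynomial.X 0) (MvPolynomial.X 1) (n + 2) (2 * (n + 2))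
      rw [← hc] at h2
      simp [φ] at h2
      have hφ : ∀ t : K, ∀ g, eval t (φ g) = MvPolynomial.aeval ![a, t] g := by
        intro t g
        have : (Polynomial.aeval t).comp φ = MvPolynomial.aeval ![a, t] := by
          ext i; fin_cases i <;> simp [φ]
        rw [← this]; simp [Polynomial.coe_aeval_eq_eval]
      have hev := coeff_hom (evalRingHom (2 * r ^ 3)) (C a) X (n + 2) (2 * (n + 2))
      rw [← h2] at hev
      simp only [coe_evalRingHom, eval_C, eval_X] at hev
      refine ode_simple p (φ c) _ _ _ ?_ ?_ (ode_B n hchar a _ rfl (φ c) h2) b ?_ ?_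
      · intro hz
        apply hnod
        rw [← hev]
        change eval _ (φ c) = 0
        rw [hz]; simp
      · change natDegree (MvPolynomial.aeval ![C a, X] c) < p
        rw [h2]
        refine lt_of_le_of_lt (deg_bound _ ?_ _ _) (by omega : n + 2 < p)
        intro i
        simp only [coeff_add, coeff_X_pow, coeff_C_mul, coeff_X, coeff_C]
        split_ifs <;> (compute_degree; try norm_num)
      · simp
        exact ⟨k4, hΔ⟩
      · have : (X - C b) ∣ φ q := by
          rw [dvd_iff_isRoot, IsRoot.def, hφ, h0]
        rw [sq]
        exact (mul_dvd_mul this this).trans (by have := map_dvd φ.toRingHom hq; rwa [map_mul] at this)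
    · obtain ⟨r, hr⟩ := IsAlgClosed.exists_pow_nat_eq (b / 2) (n := 3) (by norm_num)
      have hr0 : r ≠ 0 := by
        rintro rfl
        have : b = 0 := by field_simp at hr; linear_combination -hr
        exact hb this
      have hnod := nodal p (n + 2) (by omega) hm _ hr0
      rw [hr, show 2 * (b / 2) = b by field_simp] at hnod
      let φ : MvPolynomial (Fin 2) K →ₐ[K] K[X] := MvPolynomial.aeval ![X, C b]
      have h2 := coeff_hom φ.toRingHom (MvPolynomial.X 0) (MvPolynomial.X 1) (n + 2) (2 * (n + 2))
      rw [← hc] at h2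
      simp [φ] at h2
      have hφ : ∀ t : K, ∀ g, eval t (φ g) = MvPolynomial.aeval ![t, b] g := by
        intro t g
        have : (Polynomial.aeval t).comp φ = MvPolynomial.aeval ![t, b] := by
          ext i; fin_cases i <;> simp [φ]
        rw [← this]; simp [Polynomial.coe_aeval_eq_eval]
      have hev := coeff_hom (evalRingHom (-3 * r ^ 2)) X (C b) (n + 2) (2 * (n + 2))
      rw [← h2] at hev
      simp only [coe_evalRingHom, eval_C, eval_X] at hev
      refine ode_simple p (φ c) _ _ _ ?_ ?_ (ode_A n hchar b _ rfl (φ c) h2) a ?_ ?_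
      · intro hz
        apply hnod
        rw [← hev]
        change eval _ (φ c) = 0
        rw [hz]; simp
      · change natDegree (MvPolynomial.aeval ![X, C b] c) < p
        rw [h2]
        refine lt_of_le_of_lt (deg_bound _ ?_ _ _) (by omega : n + 2 < p)
        intro i
        simp only [coeff_add, coeff_X_pow, coeff_C_mul, coeff_X, coeff_C]
        split_ifs <;> (compute_degree; try norm_num)
      · simp
        exact ⟨k4, hΔ⟩
      · have : (X - C a) ∣ φ q := by
          rw [dvd_iff_isRoot, IsRoot.def, hφ, h0]
        rw [sq]
        exact (mul_dvd_mul this this).trans (by have := map_dvd φ.toRingHom hq; rwa [map_mul] at this)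

lemma unit_of_no_zero {K : Type*} [Field K] [IsAlgClosed K] (q : MvPolynomial (Fin 2) K)
    (h : ∀ a b : K, a ≠ 0 ∨ b ≠ 0 → MvPolynomial.aeval ![a, b] q ≠ 0) : IsUnit q := by
  have key : ∀ i : Fin 2, ∃ n : ℕ, q ∣ (MvPolynomial.X i) ^ n := by
    intro i
    have h1 : (MvPolynomial.X i : MvPolynomial (Fin 2) K) ∈
        MvPolynomial.vanishingIdeal K (MvPolynomial.zeroLocus K (Ideal.span {q})) := by
      rw [MvPolynomial.mem_vanishingIdeal_iff]
      intro x hx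
      have hx0 := hx q (Ideal.mem_span_singleton_self q)
      have hxe : x = ![x 0, x 1] := by ext j; fin_cases j <;> rfl
      rw [hxe] at hx0
      have := mt (h (x 0) (x 1)) (not_not.2 hx0)
      push Not at this
      rw [MvPolynomial.aeval_X]
      fin_cases i
      · exact this.1
      · exact this.2
    rw [MvPolynomial.vanishingIdeal_zeroLocus_eq_radical] at h1
    obtain ⟨n, hn⟩ := h1
    exact ⟨n, Ideal.mem_span_singleton.1 hn⟩
  obtain ⟨n, hn⟩ := key 0
  obtain ⟨k, hk⟩ := key 1
  obtain ⟨i, -, hi⟩ := (dvd_prime_pow (MvPolynomial.X_prime (R := K) (i := (0 : Fin 2))) n).1 hn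
  rcases Nat.eq_zero_or_pos i with h0 | h0
  · rw [h0, pow_zero] at hi
    exact associated_one_iff_isUnit.1 hi
  · exfalso
    have h1 : (MvPolynomial.X 0 : MvPolynomial (Fin 2) K) ∣ MvPolynomial.X 1 ^ k :=
      ((dvd_pow_self _ h0.ne').trans hi.symm.dvd).trans hk
    have h2 := (MvPolynomial.X_prime (R := K) (i := (0 : Fin 2))).dvd_of_dvd_pow h1
    rw [MvPolynomial.X_dvd_X] at h2
    simp at h2

/-- The coefficient `c_{A,B}` of `x^(p-1)` in `(x³ + Ax + B)^((p-1)/2)` is squarefree over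
the algebraic closure of `F_p`. -/
theorem stmt14 (p : ℕ) [hp : Fact p.Prime] (hp5 : 5 ≤ p)
    (c : MvPolynomial (Fin 2) (ZMod p))
    (hc : c = (Polynomial.coeff
      ((Polynomial.X ^ 3 + Polynomial.C (MvPolynomial.X 0) * Polynomial.X +
          Polynomial.C (MvPolynomial.X 1) :
            Polynomial (MvPolynomial (Fin 2) (ZMod p))) ^ ((p - 1) / 2))
      (p - 1))) :
    Squarefree (MvPolynomial.map
      (algebraMap (ZMod p) (AlgebraicClosure (ZMod p))) c) := by
  obtain ⟨n, hn⟩ : ∃ n, p = 2 * (n + 2) + 1 := by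
    rcases hp.out.eq_two_or_odd with h | h
    · omega
    · exact ⟨(p - 5) / 2, by omega⟩
  have e1 : (p - 1) / 2 = n + 2 := by omega
  have e2 : p - 1 = 2 * (n + 2) := by omega
  rw [e1, e2] at hc
  haveI : CharP (AlgebraicClosure (ZMod p)) p :=
    charP_of_injective_algebraMap (algebraMap (ZMod p) (AlgebraicClosure (ZMod p))).injective p
  have hc2 := coeff_hom (MvPolynomial.map (σ := Fin 2)
      (algebraMap (ZMod p) (AlgebraicClosure (ZMod p))))
      (MvPolynomial.X 0) (MvPolynomial.X 1) (n + 2) (2 * (n + 2))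
  rw [← hc, MvPolynomial.map_X, MvPolynomial.map_X] at hc2
  intro q hq
  exact unit_of_no_zero q fun a b hab => point p n hn _ q hc2 hq a b hab
end
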